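/- Over Σ = {a, b}, consider the DWAs A₁ with states {q_0, q_1}, initial state q_0, δ₁(q_0, x) = q_1 and δ₁(q_1, x) = q_1 for both letters x, weights c₁(q_0, a) = −1, c₁(q_0, b) = 2, c₁(q_1, x) = 2; and A₂ with states {q_0, q_1}, initial state q_0, δ₂(q_0, a) = q_1, δ₂(q_0, b) = q_0, δ₂(q_1, x) = q_1, weights c₂(q_0, a) = −1, c₂(q_0, b) = 2, c₂(q_1, x) = 2. Then: (1) for every nonempty word w over {a, b}, A₁(w) > 0 ⟺ A₂(w) > 0 ⟺ w ≠ a; (2) there is no DWA B over {a, b} with a single state such that for every nonempty word w, B(w) > 0 ⟺ w ≠ a; (3) A₁ and A₂ are not isomorphic, i.e., there is no bijection between their state sets mapping initial state to initial state and preserving both the transition function and the weight function. Hence minimal-size binary PODWA need not be unique up to isomorphism. -/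

import Mathlib

/-- A deterministic weighted automaton (DWA) over alphabet `A` with state space `Q`. -/
structure DWA (A : Type) (Q : Type) where
  init : Q
  δ : Q → A → Q
  c : Q → A → ℤ

/-- The extended transition function `δ̂`. -/
def DWA.run {A Q : Type} (M : DWA A Q) (q : Q) (w : List A) : Q :=
  w.foldl M.δ q

/-- The accumulated weight of the run on `w` starting in state `q`. -/
def DWA.valFrom {A Q : Type} (M : DWA A Q) : Q → List A → ℤ
  | _, [] => 0
  | q, x :: w => M.c q x + M.valFrom (M.δ q x) w

/-- The value `A(w)` of a word: the sum of the weights along the run from the initial state. -/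
def DWA.val {A Q : Type} (M : DWA A Q) (w : List A) : ℤ :=
  M.valFrom M.init w

/-- The two-letter alphabet `{a, b}`. -/
inductive AB where
  | a : AB
  | b : AB
deriving DecidableEq

/-!
Both automata reject `a` because its only weight is `-1`. A potential on the states, `-1` at `q_0`
and `0` at `q_1`, bounds every suffix value from below, and this makes all other nonempty words
positive. In an automaton with a single state the word `aa` has twice the value of `a`, so the two
cannot have different signs. The automata are told apart by the words leading back to the initial
state, which an isomorphism preserves: `b` is such a word for `A₂` but not for `A₁`.
-/

namespace DWA

variable {A Q Q' : Type} {M : DWA A Q} {N : DWA A Q'} {φ : Q → ℤ} {g : Q → Q'} {a : A}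

/-- A (feasible) potential of a weighted automaton: each edge `q → q'` weighs at least
`φ q - φ q'`. Nonpositivity is included so that `φ` bounds the values of all runs from below. -/
structure IsPotential (M : DWA A Q) (φ : Q → ℤ) : Prop where
  nonpos : ∀ q, φ q ≤ 0
  le_add : ∀ q x, φ q ≤ M.c q x + φ (M.δ q x)

theorem IsPotential.le_valFrom (hφ : M.IsPotential φ) (q : Q) (w : List A) :
    φ q ≤ M.valFrom q w := by
  induction w generalizing q with
  | nil => exact hφ.nonpos q
  | cons x w ih =>
    calc
      φ q ≤ M.c q x + φ (M.δ q x) := hφ.le_add q x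
      _ ≤ M.c q x + M.valFrom (M.δ q x) w := by grw [ih]

theorem IsPotential.val_pos_iff_ne_singleton (hφ : M.IsPotential φ)
    (ha : M.c M.init a ≤ 0)
    (hne : ∀ x, x ≠ a → 0 < M.c M.init x + φ (M.δ M.init x))
    (hcons : ∀ y, 0 < M.c M.init a + (M.c (M.δ M.init a) y + φ (M.δ (M.δ M.init a) y)))
    {w : List A} (hw : w ≠ []) : 0 < M.val w ↔ w ≠ [a] := by
  constructor
  · rintro hpos rfl
    exact hpos.not_ge (by simpa only [val, valFrom, add_zero] using ha)
  · intro hwa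
    obtain ⟨x, w, rfl⟩ := List.exists_cons_of_ne_nil hw
    by_cases hx : x = a
    · subst hx
      obtain ⟨y, w, rfl⟩ := List.exists_cons_of_ne_nil (mt (congrArg (x :: ·)) hwa)
      exact (hcons y).trans_le (by simp only [val, valFrom]; grw [hφ.le_valFrom _ w])
    · exact (hne x hx).trans_le (by simp only [val, valFrom]; grw [hφ.le_valFrom _ w])

theorem valFrom_replicate {q : Q} {x : A} (hx : M.δ q x = q) (n : ℕ) :
    M.valFrom q (List.replicate n x) = n * M.c q x := by
  induction n with
  | zero => simp [valFrom]
  | succ n ih =>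
    rw [List.replicate_succ, valFrom, hx, ih]
    push_cast
    ring

theorem δ_init_ne_init_of_val_pos_iff_ne_singleton
    (hM : ∀ w : List A, w ≠ [] → (0 < M.val w ↔ w ≠ [a])) :
    M.δ M.init a ≠ M.init := by
  intro hloop
  have hval (n : ℕ) : M.val (List.replicate n a) = n * M.c M.init a := valFrom_replicate hloop n
  have one : ¬ 0 < M.val (List.replicate 1 a) := by simp [hM]
  have two : 0 < M.val (List.replicate 2 a) := by simp [hM]
  rw [hval] at one two
  lia

theorem map_run (hδ : ∀ q x, g (M.δ q x) = N.δ (g q) x) (q : Q) (w : List A) :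
    g (M.run q w) = N.run (g q) w :=
  (List.foldl_hom g fun q x => (hδ q x).symm).symm

theorem run_init_eq_init_iff (hg : Function.Injective g) (hinit : g M.init = N.init)
    (hδ : ∀ q x, g (M.δ q x) = N.δ (g q) x) (w : List A) :
    M.run M.init w = M.init ↔ N.run N.init w = N.init := by
  rw [← hg.eq_iff, map_run hδ, hinit]

end DWA

/-- the two 2-state DWAs `A₁` and `A₂` (states modelled by `Bool`, with
`q_0 = false`, `q_1 = true`) are observationally equivalent — both accept exactly the
nonempty words different from `a` — and minimal (no single-state DWA is equivalent), yet not
isomorphic. Hence minimal-size binary PODWA need not be unique up to isomorphism. -/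
theorem minimal_podwa_not_unique :
    let A₁ : DWA AB Bool :=
      ⟨false, fun _ _ => true,
        fun q x => if q then 2 else (match x with | AB.a => -1 | AB.b => 2)⟩
    let A₂ : DWA AB Bool :=
      ⟨false, fun q x => if q then true else (match x with | AB.a => true | AB.b => false),
        fun q x => if q then 2 else (match x with | AB.a => -1 | AB.b => 2)⟩
    (∀ w : List AB, w ≠ [] →
        ((0 < A₁.val w ↔ w ≠ [AB.a]) ∧ (0 < A₂.val w ↔ w ≠ [AB.a]))) ∧
    (¬ ∃ B : DWA AB Unit, ∀ w : List AB, w ≠ [] → (0 < B.val w ↔ w ≠ [AB.a])) ∧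
    (¬ ∃ g : Bool → Bool, Function.Bijective g ∧
        g A₁.init = A₂.init ∧
        (∀ q x, g (A₁.δ q x) = A₂.δ (g q) x) ∧
        (∀ q x, A₁.c q x = A₂.c (g q) x)) := by
  intro A₁ A₂
  let φ : Bool → ℤ := fun q => if q then 0 else -1
  have hφ₁ : A₁.IsPotential φ := ⟨by decide, by rintro (_ | _) (_ | _) <;> decide⟩
  have hφ₂ : A₂.IsPotential φ := ⟨by decide, by rintro (_ | _) (_ | _) <;> decide⟩
  refine ⟨fun w hw => ⟨?_, ?_⟩, ?_, ?_⟩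
  · exact hφ₁.val_pos_iff_ne_singleton (by decide) (by rintro (_ | _) <;> decide)
      (by rintro (_ | _) <;> decide) hw
  · exact hφ₂.val_pos_iff_ne_singleton (by decide) (by rintro (_ | _) <;> decide)
      (by rintro (_ | _) <;> decide) hw
  · rintro ⟨B, hB⟩
    exact DWA.δ_init_ne_init_of_val_pos_iff_ne_singleton hB rfl
  · rintro ⟨g, hg, hinit, hδ, -⟩
    have hloop : A₂.run A₂.init [AB.b] = A₂.init := rfl
    have hleave : A₁.run A₁.init [AB.b] ≠ A₁.init := by decide
    exact hleave ((DWA.run_init_eq_init_iff hg.injective hinit hδ [AB.b]).mpr hloop)
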